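/- arXiv:2008.11101 — 3 statements merged into one kernel-verified Lean document; each statement's English description precedes it below -/
import Mathlib

section
/- For every biquadratic polynomial Q(x,y) over ℚ, the Eisenstein D-invariants of its two partial discriminants coincide: D(Δ₁) = D(Δ₂). -/
open Polynomial

/-- The Eisenstein `D`-invariant of a quartic polynomial
`f = a x⁴ + 4b x³ + 6c x² + 4d x + e`, i.e. `D(f) = a e + 3 c² − 4 b d`,
expressed via the raw coefficients of `f`
(`a = f.coeff 4`, `b = f.coeff 3 / 4`, `c = f.coeff 2 / 6`, `d = f.coeff 1 / 4`,
`e = f.coeff 0`). -/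
noncomputable def eisensteinD (f : Polynomial ℚ) : ℚ :=
  f.coeff 4 * f.coeff 0 + 3 * (f.coeff 2 / 6) ^ 2 - 4 * (f.coeff 3 / 4) * (f.coeff 1 / 4)

/-- The `D`-invariant of the discriminant `b² - 4ac` of three polynomials of degree at most two,
in terms of their coefficients. -/
theorem eisensteinD_discriminant (a b c : Fin 3 → ℚ) :
    eisensteinD ((∑ j : Fin 3, C (b j) * X ^ (j : ℕ)) ^ 2 -
        4 * (∑ j : Fin 3, C (a j) * X ^ (j : ℕ)) * (∑ j : Fin 3, C (c j) * X ^ (j : ℕ))) =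
      (b 2 ^ 2 - 4 * (a 2 * c 2)) * (b 0 ^ 2 - 4 * (a 0 * c 0)) +
        (2 * b 0 * b 2 + b 1 ^ 2 - 4 * (a 0 * c 2 + a 1 * c 1 + a 2 * c 0)) ^ 2 / 12 -
        (2 * b 1 * b 2 - 4 * (a 1 * c 2 + a 2 * c 1)) *
          (2 * b 0 * b 1 - 4 * (a 0 * c 1 + a 1 * c 0)) / 4 := by
  have expand : (∑ j : Fin 3, C (b j) * X ^ (j : ℕ)) ^ 2 -
        4 * (∑ j : Fin 3, C (a j) * X ^ (j : ℕ)) * (∑ j : Fin 3, C (c j) * X ^ (j : ℕ)) =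
      C (b 2 ^ 2 - 4 * (a 2 * c 2)) * X ^ 4 +
        C (2 * b 1 * b 2 - 4 * (a 1 * c 2 + a 2 * c 1)) * X ^ 3 +
        C (2 * b 0 * b 2 + b 1 ^ 2 - 4 * (a 0 * c 2 + a 1 * c 1 + a 2 * c 0)) * X ^ 2 +
        C (2 * b 0 * b 1 - 4 * (a 0 * c 1 + a 1 * c 0)) * X ^ 1 +
        C (b 0 ^ 2 - 4 * (a 0 * c 0)) * X ^ 0 := by
    have hC2 : (C 2 : ℚ[X]) = 2 := rfl
    have hC4 : (C 4 : ℚ[X]) = 4 := rfl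
    simp only [Fin.sum_univ_three, Fin.val_zero, Fin.val_one, Fin.val_two, C_add, C_sub, C_mul,
      C_pow, hC2, hC4]
    ring
  rw [expand]
  simp only [eisensteinD, coeff_add, coeff_C_mul_X_pow]
  norm_num
  ring

/-- For a biquadratic polynomial `Q(x,y) = Σ_{0 ≤ i,j ≤ 2} q i j * x^i * y^j` over `ℚ`,
the Eisenstein `D`-invariants of its two partial discriminants
`Δ₁(y) = b̃(y)² − 4 ã(y) c̃(y)` and `Δ₂(x) = b(x)² − 4 a(x) c(x)` coincide. -/
theorem eisensteinD_partialDiscriminant_eq (q : Fin 3 → Fin 3 → ℚ) :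
    eisensteinD ((∑ j : Fin 3, C (q 1 j) * X ^ (j : ℕ)) ^ 2 -
        4 * (∑ j : Fin 3, C (q 2 j) * X ^ (j : ℕ)) * (∑ j : Fin 3, C (q 0 j) * X ^ (j : ℕ))) =
      eisensteinD ((∑ i : Fin 3, C (q i 1) * X ^ (i : ℕ)) ^ 2 -
        4 * (∑ i : Fin 3, C (q i 2) * X ^ (i : ℕ)) * (∑ i : Fin 3, C (q i 0) * X ^ (i : ℕ))) := by
  rw [eisensteinD_discriminant (q 2) (q 1) (q 0),
    eisensteinD_discriminant (fun i => q i 2) (fun i => q i 1) (fun i => q i 0)]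
  ring
end

section
/- For every biquadratic polynomial Q(x,y) over ℚ, the Eisenstein E-invariants of its two partial discriminants coincide: E(Δ₁) = E(Δ₂). -/
open Polynomial

/-- The Eisenstein `E`-invariant of a quartic polynomial
`f = a x⁴ + 4b x³ + 6c x² + 4d x + e`, i.e.
`E(f) = a d² + b² e − a c e − 2 b c d + c³`, expressed via the raw coefficients of `f`
(`a = f.coeff 4`, `b = f.coeff 3 / 4`, `c = f.coeff 2 / 6`, `d = f.coeff 1 / 4`,
`e = f.coeff 0`). -/
noncomputable def eisensteinE (f : Polynomial ℚ) : ℚ :=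
  f.coeff 4 * (f.coeff 1 / 4) ^ 2 + (f.coeff 3 / 4) ^ 2 * f.coeff 0 -
    f.coeff 4 * (f.coeff 2 / 6) * f.coeff 0 -
    2 * (f.coeff 3 / 4) * (f.coeff 2 / 6) * (f.coeff 1 / 4) + (f.coeff 2 / 6) ^ 3

/-- The Eisenstein `E`-invariant of an explicitly given quartic. -/
lemma eisensteinE_quartic (a b c d e : ℚ) :
    eisensteinE (C a * X ^ 4 + C b * X ^ 3 + C c * X ^ 2 + C d * X + C e) =
      a * (d / 4) ^ 2 + (b / 4) ^ 2 * e - a * (c / 6) * e -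
        2 * (b / 4) * (c / 6) * (d / 4) + (c / 6) ^ 3 := by
  simp [eisensteinE, coeff_X, coeff_C]

/-- The discriminant of a quadratic polynomial whose coefficients `u`, `v`, `w` are themselves
quadratic polynomials, expanded as a quartic. -/
lemma discrim_quadratics_eq_quartic (u v w : Fin 3 → ℚ) :
    (∑ j : Fin 3, C (v j) * X ^ (j : ℕ)) ^ 2 -
        4 * (∑ j : Fin 3, C (u j) * X ^ (j : ℕ)) * (∑ j : Fin 3, C (w j) * X ^ (j : ℕ)) =
      C (v 2 ^ 2 - 4 * (u 2 * w 2)) * X ^ 4 +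
        C (2 * (v 1 * v 2) - 4 * (u 1 * w 2 + u 2 * w 1)) * X ^ 3 +
        C (v 1 ^ 2 + 2 * (v 0 * v 2) - 4 * (u 0 * w 2 + u 1 * w 1 + u 2 * w 0)) * X ^ 2 +
        C (2 * (v 0 * v 1) - 4 * (u 0 * w 1 + u 1 * w 0)) * X +
        C (v 0 ^ 2 - 4 * (u 0 * w 0)) := by
  have h2 : (C 2 : ℚ[X]) = 2 := rfl
  have h4 : (C 4 : ℚ[X]) = 4 := rfl
  simp only [Fin.sum_univ_three, C_sub, C_add, C_mul, C_pow, h2, h4, Fin.val_zero, Fin.val_one,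
    Fin.val_two]
  ring

/-- For a biquadratic polynomial `Q(x,y) = Σ_{0 ≤ i,j ≤ 2} q i j * x^i * y^j` over `ℚ`,
the Eisenstein `E`-invariants of its two partial discriminants
`Δ₁(y) = b̃(y)² − 4 ã(y) c̃(y)` and `Δ₂(x) = b(x)² − 4 a(x) c(x)` coincide. -/
theorem eisensteinE_partialDiscriminant_eq (q : Fin 3 → Fin 3 → ℚ) :
    eisensteinE ((∑ j : Fin 3, C (q 1 j) * X ^ (j : ℕ)) ^ 2 -
        4 * (∑ j : Fin 3, C (q 2 j) * X ^ (j : ℕ)) * (∑ j : Fin 3, C (q 0 j) * X ^ (j : ℕ))) =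
      eisensteinE ((∑ i : Fin 3, C (q i 1) * X ^ (i : ℕ)) ^ 2 -
        4 * (∑ i : Fin 3, C (q i 2) * X ^ (i : ℕ)) * (∑ i : Fin 3, C (q i 0) * X ^ (i : ℕ))) := by
  rw [discrim_quadratics_eq_quartic (q 2) (q 1) (q 0),
    discrim_quadratics_eq_quartic (fun i => q i 2) (fun i => q i 1) (fun i => q i 0),
    eisensteinE_quartic, eisensteinE_quartic]
  ring
end

section
/- For arbitrary rational numbers q_{ij} (0 ≤ i,j ≤ 2), the quantities X and Y constructed from them satisfy the polynomial identity Y² = 4X³ − D·X + E, where D = D(Δ₂) and E = E(Δ₂) are the Eisenstein invariants of the partial discriminant Δ₂ of the biquadratic polynomial Q(x,y) = Σ q_{ij}x^i y^j. Equivalently, the point Ω₃ = (X, Y) induced by the QRT map of the walk lies on the Weierstrass curve y² = 4x³ − g₂x − g₃ with g₂ = D(Δ₂) and g₃ = −E(Δ₂). -/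
open Polynomial

/-- The coefficients of the discriminant `b² - 4ac` of a quadratic whose coefficients
`a`, `b`, `c` are themselves polynomials of degree at most two. -/
theorem discriminant_eq_quartic (a b c : Fin 3 → ℚ) :
    (∑ i : Fin 3, C (b i) * X ^ (i : ℕ)) ^ 2 -
      4 * (∑ i : Fin 3, C (a i) * X ^ (i : ℕ)) * (∑ i : Fin 3, C (c i) * X ^ (i : ℕ)) =
    C (b 2 ^ 2 - 4 * a 2 * c 2) * X ^ 4 +
      C (2 * b 1 * b 2 - 4 * (a 1 * c 2 + a 2 * c 1)) * X ^ 3 +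
      C (b 1 ^ 2 + 2 * b 0 * b 2 - 4 * (a 0 * c 2 + a 1 * c 1 + a 2 * c 0)) * X ^ 2 +
      C (2 * b 0 * b 1 - 4 * (a 0 * c 1 + a 1 * c 0)) * X +
      C (b 0 ^ 2 - 4 * a 0 * c 0) := by
  have h4 : (C 4 : ℚ[X]) = 4 := rfl
  have h2 : (C 2 : ℚ[X]) = 2 := rfl
  simp only [Fin.sum_univ_three, Fin.val_zero, Fin.val_one, Fin.val_two, map_add, map_sub,
    map_mul, map_pow, h4, h2]
  ring

/-- For arbitrary rationals `q i j` (the coefficient matrix of the kernel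
`Q(x,y) = Σ q i j * x^i * y^j` of a weighted walk), the point `Ω₃ = (X, Y)` with
`X = (q₁₁² − 4 q₁₀ q₁₂ − 4 q₀₁ q₂₁ + 8 q₀₂ q₂₀ + 8 q₀₀ q₂₂)/12` and `Y = − det M`
lies on the Weierstrass curve `y² = 4x³ − g₂ x − g₃` with `g₂ = D(Δ₂)`, `g₃ = −E(Δ₂)`:
that is, `Y² = 4X³ − D·X + E`. -/
theorem omega_three_on_weierstrass_normal_form (q : Fin 3 → Fin 3 → ℚ)
    (X : ℚ) (hX : X = (q 1 1 ^ 2 - 4 * q 1 0 * q 1 2 - 4 * q 0 1 * q 2 1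
      + 8 * q 0 2 * q 2 0 + 8 * q 0 0 * q 2 2) / 12)
    (Y : ℚ) (hY : Y = - Matrix.det
      !![q 2 2, q 2 1, q 2 0; q 1 2, q 1 1, q 1 0; q 0 2, q 0 1, q 0 0])
    (D E : ℚ)
    (hD : D = eisensteinD ((∑ i : Fin 3, Polynomial.C (q i 1) * Polynomial.X ^ (i : ℕ)) ^ 2 -
      4 * (∑ i : Fin 3, Polynomial.C (q i 2) * Polynomial.X ^ (i : ℕ)) *
        (∑ i : Fin 3, Polynomial.C (q i 0) * Polynomial.X ^ (i : ℕ))))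
    (hE : E = eisensteinE ((∑ i : Fin 3, Polynomial.C (q i 1) * Polynomial.X ^ (i : ℕ)) ^ 2 -
      4 * (∑ i : Fin 3, Polynomial.C (q i 2) * Polynomial.X ^ (i : ℕ)) *
        (∑ i : Fin 3, Polynomial.C (q i 0) * Polynomial.X ^ (i : ℕ)))) :
    Y ^ 2 = 4 * X ^ 3 - D * X + E := by
  subst hX hY hD hE
  rw [discriminant_eq_quartic (fun i => q i 2) (fun i => q i 1) (fun i => q i 0)]
  simp only [eisensteinD, eisensteinE, Matrix.det_fin_three, Matrix.of_apply, Matrix.cons_val,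
    coeff_add, coeff_C_mul, coeff_X_pow, coeff_X, coeff_C]
  norm_num
  ring
end
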